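/- For each k ≥ 1 and |q| < 1: Σ_{λ: l(λ) ≤ k} q^{n_2(λ)} / ((-q;q)_{λ_k} (q;q)_λ) = (q^{2k+2}, q^{k+1}, q^{k+1}; q^{2k+2})_∞ / (q;q)_∞. -/

import Mathlib

/-- Finite q-Pochhammer symbol `(x;q)_n = ∏_{k=0}^{n-1} (1 - x q^k)`. -/
noncomputable def qPoch (x q : ℂ) (n : ℕ) : ℂ := ∏ k ∈ Finset.range n, (1 - x * q ^ k)

/-- Infinite q-Pochhammer symbol `(x;q)_∞ = ∏_{k≥0} (1 - x q^k)`. -/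
noncomputable def qPochInf (x q : ℂ) : ℂ := ∏' k : ℕ, (1 - x * q ^ k)

/-- Partitions with at most `k` (positive) parts: antitone sequences of naturals vanishing
from index `k` on; `l 0` is the largest part `λ_1`, and `l (k-1)` is `λ_k`. -/
def PartK (k : ℕ) : Type := {l : ℕ → ℕ // Antitone l ∧ ∀ i, k ≤ i → l i = 0}

/-- `|λ| = Σ_i λ_i`. -/
def wtK (k : ℕ) (l : PartK k) : ℕ := ∑ i ∈ Finset.range k, l.1 i

/-- `n_2(λ) = Σ_i λ_i^2`. -/
def n2K (k : ℕ) (l : PartK k) : ℕ := ∑ i ∈ Finset.range k, (l.1 i) ^ 2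

/-- `n(λ) = Σ_i binom(λ_i, 2)`. -/
def nK (k : ℕ) (l : PartK k) : ℕ := ∑ i ∈ Finset.range k, Nat.choose (l.1 i) 2

/-- `(x;q)_λ = ∏_{i=1}^{k} (x;q)_{λ_i - λ_{i+1}}` (with `λ_{k+1} = 0`). -/
noncomputable def pochK (x q : ℂ) (k : ℕ) (l : PartK k) : ℂ :=
  ∏ i ∈ Finset.range k, qPoch x q (l.1 i - l.1 (i + 1))

/-! The sequences `α` and `β n = ∑ r ≤ n, α r / ((q;q)_{n-r} (q;q)_{n+r})` form a Bailey pair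
relative to `1`. By Bailey's lemma, a consequence of the `q`-Vandermonde sum, `q^{r²} α r` is then
paired with `∑ r ≤ n, q^{r²} β r / (q;q)_{n-r}`. Summing a multisum over its smallest part is one
such step, so a sum over partitions with at most `k` parts collapses to
`∑ r, q^{k r²} α r / (q;q)_∞`. The pair `α r = 2 (-1)^r q^{r²}` (halved at `r = 0`),
`β n = 1 / (q²;q²)_n` gives the left-hand side of the theorem; the same pair, in the limit `n → ∞`,
evaluates the theta series `1 + 2 ∑ (-1)^r y^{r²}` that arises on the right. -/

open Finset Filter Topology

section Finite

lemma one_sub_pow_mul_vandermonde_succ {R : Type*} [CommRing R] {q : R} {u : ℕ → R}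
    (hu : ∀ m, u m = (1 - q ^ (m + 1)) * u (m + 1)) (n c : ℕ) :
    (1 - q ^ (n + 1)) *
        ∑ p ∈ antidiagonal (n + 1), q ^ (p.1 * (p.1 + c)) * u p.1 * u (p.1 + c) * u p.2 =
      ∑ p ∈ antidiagonal n,
        q ^ (p.1 * (p.1 + (c + 1))) * u p.1 * u (p.1 + (c + 1)) * u p.2 := by
  calc
    _ = ∑ p ∈ antidiagonal (n + 1), ((1 - q ^ p.1) * u p.1 *
            (q ^ (p.1 * (p.1 + c)) * u (p.1 + c) * u p.2)) +
          ∑ p ∈ antidiagonal (n + 1), ((1 - q ^ p.2) * u p.2 *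
            (q ^ (p.1 * (p.1 + c) + p.1) * u p.1 * u (p.1 + c))) := by
        rw [mul_sum, ← sum_add_distrib]
        refine sum_congr rfl fun p hp ↦ ?_
        rw [← HasAntidiagonal.mem_antidiagonal.1 hp]
        ring
    _ = ∑ p ∈ antidiagonal n, (u p.1 *
            (q ^ ((p.1 + 1) * (p.1 + 1 + c)) * u (p.1 + 1 + c) * u p.2)) +
          ∑ p ∈ antidiagonal n, (u p.2 *
            (q ^ (p.1 * (p.1 + c) + p.1) * u p.1 * u (p.1 + c))) := by
        rw [Nat.sum_antidiagonal_succ, Nat.sum_antidiagonal_succ']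
        simp only [pow_zero, sub_self, zero_mul, zero_add, ← hu]
    _ = _ := by
        rw [← sum_add_distrib]
        refine sum_congr rfl fun p _ ↦ ?_
        rw [hu (p.1 + c), add_right_comm p.1 1 c, ← add_assoc p.1 c 1]
        ring

variable {q : ℂ}

lemma qPoch_zero (x q : ℂ) : qPoch x q 0 = 1 := prod_range_zero _

lemma qPoch_succ (x q : ℂ) (n : ℕ) : qPoch x q (n + 1) = qPoch x q n * (1 - x * q ^ n) :=
  prod_range_succ _ n

lemma one_sub_pow_ne_zero (hq : ¬IsOfFinOrder q) {n : ℕ} (hn : 0 < n) : 1 - q ^ n ≠ 0 := fun h ↦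
  hq (isOfFinOrder_iff_pow_eq_one.2 ⟨n, hn, (sub_eq_zero.1 h).symm⟩)

/-- The reciprocal `1 / (q;q)_n`. -/
noncomputable def invPoch (q : ℂ) (n : ℕ) : ℂ := (qPoch q q n)⁻¹

lemma invPoch_zero (q : ℂ) : invPoch q 0 = 1 := by rw [invPoch, qPoch_zero, inv_one]

lemma invPoch_eq_mul_succ (hq : ¬IsOfFinOrder q) (n : ℕ) :
    invPoch q n = (1 - q ^ (n + 1)) * invPoch q (n + 1) := by
  have h := one_sub_pow_ne_zero hq n.succ_pos
  rw [Nat.succ_eq_add_one, pow_succ'] at h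
  rw [invPoch, invPoch, qPoch_succ, pow_succ', mul_inv, mul_left_comm, mul_inv_cancel₀ h, mul_one]

lemma qPoch_mul_qPoch_neg (q : ℂ) (n : ℕ) :
    qPoch q q n * qPoch (-q) q n = qPoch (q ^ 2) (q ^ 2) n := by
  simp only [qPoch, ← prod_mul_distrib]
  exact prod_congr rfl fun k _ ↦ by ring

lemma qPoch_mul_qPoch_sq (q : ℂ) (n : ℕ) :
    qPoch q (q ^ 2) n * qPoch (q ^ 2) (q ^ 2) n = qPoch q q (2 * n) := by
  induction n with
  | zero => simp only [mul_zero, qPoch_zero, mul_one]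
  | succ n ih =>
    rw [show 2 * (n + 1) = 2 * n + 1 + 1 by ring]
    simp only [qPoch_succ]
    rw [← ih]
    ring

theorem q_vandermonde (hq : ¬IsOfFinOrder q) (n c : ℕ) :
    ∑ p ∈ antidiagonal n,
        q ^ (p.1 * (p.1 + c)) * invPoch q p.1 * invPoch q (p.1 + c) * invPoch q p.2 =
      invPoch q n * invPoch q (n + c) := by
  induction n generalizing c with
  | zero => simp [invPoch_zero]
  | succ n ih =>
    refine mul_left_cancel₀ (one_sub_pow_ne_zero hq n.succ_pos) ?_
    rw [one_sub_pow_mul_vandermonde_succ (invPoch_eq_mul_succ hq), ih,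
      invPoch_eq_mul_succ hq n, add_right_comm n 1 c, add_assoc n c 1, mul_assoc]

/-- The sequence `β` of the Bailey pair relative to `1` with given `α`, that is
`β n = ∑ r ≤ n, α r / ((q;q)_{n-r} (q;q)_{n+r})`; here `p = (r, n - r)`. -/
noncomputable def baileyBeta (q : ℂ) (α : ℕ → ℂ) (n : ℕ) : ℂ :=
  ∑ p ∈ antidiagonal n, α p.1 * (invPoch q p.2 * invPoch q (p.2 + 2 * p.1))

theorem bailey_lemma (hq : ¬IsOfFinOrder q) (α : ℕ → ℂ) (n : ℕ) :
    ∑ p ∈ antidiagonal n, q ^ p.1 ^ 2 * baileyBeta q α p.1 * invPoch q p.2 =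
      baileyBeta q (fun r ↦ q ^ r ^ 2 * α r) n := by
  calc
    _ = ∑ p ∈ antidiagonal n, ∑ s ∈ antidiagonal p.1, q ^ p.1 ^ 2 *
          (α s.1 * (invPoch q s.2 * invPoch q (s.2 + 2 * s.1))) * invPoch q p.2 := by
        simp only [baileyBeta, mul_sum, sum_mul]
    _ = ∑ p ∈ antidiagonal n, ∑ s ∈ antidiagonal p.2, q ^ (p.1 + s.1) ^ 2 *
          (α p.1 * (invPoch q s.1 * invPoch q (s.1 + 2 * p.1))) * invPoch q s.2 := by
        rw [sum_sigma', sum_sigma']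
        refine sum_nbij' (fun x ↦ ⟨(x.2.1, x.2.2 + x.1.2), (x.2.2, x.1.2)⟩)
          (fun x ↦ ⟨(x.1.1 + x.2.1, x.2.2), (x.1.1, x.2.1)⟩) ?_ ?_ ?_ ?_ ?_ <;>
        simp +contextual [Sigma.forall, Prod.forall, mem_sigma,
          HasAntidiagonal.mem_antidiagonal] <;>
        grind
    _ = ∑ p ∈ antidiagonal n, q ^ p.1 ^ 2 * α p.1 * ∑ s ∈ antidiagonal p.2,
          q ^ (s.1 * (s.1 + 2 * p.1)) * invPoch q s.1 * invPoch q (s.1 + 2 * p.1) *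
            invPoch q s.2 := by
        refine sum_congr rfl fun p _ ↦ ?_
        rw [mul_sum]
        exact sum_congr rfl fun s _ ↦ by ring
    _ = _ := by simp only [q_vandermonde hq, baileyBeta]

/-- The coefficients of `∑_{n ∈ ℤ} (-1)^n y^{n²}`, collected as a series over `ℕ`. -/
noncomputable def thetaCoeff (n : ℕ) : ℂ := if n = 0 then 1 else 2 * (-1) ^ n

lemma thetaCoeff_zero : thetaCoeff 0 = 1 := if_pos rfl

lemma thetaCoeff_succ (n : ℕ) : thetaCoeff (n + 1) = 2 * (-1) ^ (n + 1) := if_neg n.succ_ne_zero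

lemma norm_thetaCoeff_le (n : ℕ) : ‖thetaCoeff n‖ ≤ 2 := by
  rw [thetaCoeff]
  split_ifs <;> simp

lemma baileyBeta_eq_sum_range (q : ℂ) (α : ℕ → ℂ) (n : ℕ) :
    baileyBeta q α n = ∑ r ∈ range (n + 1), α r * (invPoch q (n - r) * invPoch q (n + r)) := by
  rw [baileyBeta, Nat.sum_antidiagonal_eq_sum_range_succ_mk]
  refine sum_congr rfl fun r hr ↦ ?_
  rw [show n - r + 2 * r = n + r by have := mem_range.1 hr; omega]

/-- The defect in the recurrence `(1 - q^{2n+2}) β (n + 1) = β n` telescopes. -/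
lemma sum_range_theta_defect (hq : ¬IsOfFinOrder q) {N n : ℕ} (hN : N ≤ n) :
    ∑ r ∈ range (N + 1), q ^ r ^ 2 * thetaCoeff r *
        ((1 - q ^ (2 * n + 2)) * (invPoch q (n + 1 - r) * invPoch q (n + 1 + r)) -
          invPoch q (n - r) * invPoch q (n + r)) =
      2 * (-1) ^ N * q ^ (N ^ 2 + N + n + 1) * (invPoch q (n - N) * invPoch q (n + N + 1)) := by
  induction N with
  | zero =>
    simp only [zero_add, sum_range_one, thetaCoeff_zero, Nat.sub_zero, add_zero]
    rw [invPoch_eq_mul_succ hq n]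
    ring
  | succ N ih =>
    obtain ⟨m, rfl⟩ := Nat.exists_eq_add_of_le hN
    rw [sum_range_succ, ih (by omega), thetaCoeff_succ,
      show N + 1 + m - N = m + 1 by omega, show N + 1 + m + 1 - (N + 1) = m + 1 by omega,
      show N + 1 + m - (N + 1) = m by omega,
      show N + 1 + m + 1 + (N + 1) = N + 1 + m + (N + 1) + 1 by ring,
      show N + 1 + m + N + 1 = N + 1 + m + (N + 1) by ring,
      invPoch_eq_mul_succ hq m, invPoch_eq_mul_succ hq (N + 1 + m + (N + 1))]
    ring

lemma baileyBeta_theta_recurrence (hq : ¬IsOfFinOrder q) (n : ℕ) :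
    (1 - q ^ (2 * n + 2)) * baileyBeta q (fun r ↦ q ^ r ^ 2 * thetaCoeff r) (n + 1) =
      baileyBeta q (fun r ↦ q ^ r ^ 2 * thetaCoeff r) n := by
  have hdefect := sum_range_theta_defect hq le_rfl (n := n)
  simp only [mul_sub, sum_sub_distrib, mul_left_comm _ (1 - q ^ (2 * n + 2)), ← mul_sum,
    Nat.sub_self] at hdefect
  rw [baileyBeta_eq_sum_range, baileyBeta_eq_sum_range, sum_range_succ, thetaCoeff_succ,
    Nat.sub_self, mul_add, sub_eq_iff_eq_add'.1 hdefect,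
    show n + 1 + (n + 1) = n + n + 1 + 1 by ring, invPoch_eq_mul_succ hq (n + n + 1)]
  ring

theorem baileyBeta_theta (hq : ¬IsOfFinOrder q) (n : ℕ) :
    baileyBeta q (fun r ↦ q ^ r ^ 2 * thetaCoeff r) n = (qPoch (q ^ 2) (q ^ 2) n)⁻¹ := by
  induction n with
  | zero => simp [baileyBeta, thetaCoeff_zero, invPoch_zero, qPoch_zero]
  | succ n ih =>
    have h := one_sub_pow_ne_zero hq (show 0 < 2 * n + 2 by omega)
    refine mul_left_cancel₀ h ?_
    rw [baileyBeta_theta_recurrence hq, ih, qPoch_succ, ← pow_mul, ← pow_add, add_comm 2, mul_inv,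
      mul_left_comm, mul_inv_cancel₀ h, mul_one]

end Finite

section Limits

variable {x q : ℂ}

lemma not_isOfFinOrder_of_norm_lt_one {R : Type*} [NormedRing R] [NormMulClass R] [NormOneClass R]
    {a : R} (ha : ‖a‖ < 1) : ¬IsOfFinOrder a := fun h ↦
  ha.ne h.norm_eq_one

lemma summable_norm_neg_mul_pow (x : ℂ) (hq : ‖q‖ < 1) : Summable fun n : ℕ ↦ ‖-(x * q ^ n)‖ := by
  simp only [norm_neg, norm_mul, norm_pow]
  exact (summable_geometric_of_lt_one (norm_nonneg q) hq).mul_left ‖x‖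

lemma tendsto_qPoch (x : ℂ) (hq : ‖q‖ < 1) :
    Tendsto (qPoch x q) atTop (𝓝 (qPochInf x q)) := by
  have hlimit :=
    (multipliable_one_add_of_summable (summable_norm_neg_mul_pow x hq)).tendsto_prod_tprod_nat
  simp only [← sub_eq_add_neg] at hlimit
  exact hlimit

lemma qPochInf_ne_zero (hx : ‖x‖ < 1) (hq : ‖q‖ < 1) : qPochInf x q ≠ 0 := by
  have hfactor (n : ℕ) : 1 + -(x * q ^ n) ≠ 0 := by
    have hlt : ‖x * q ^ n‖ < 1 := by
      rw [norm_mul, norm_pow]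
      exact mul_lt_one_of_nonneg_of_lt_one_left (norm_nonneg x) hx
        (pow_le_one₀ (norm_nonneg q) hq.le)
    rw [← sub_eq_add_neg]
    exact sub_ne_zero.2 fun h ↦ hlt.ne (by rw [← h, norm_one])
  simpa only [qPochInf, sub_eq_add_neg] using
    tprod_one_add_ne_zero_of_summable hfactor (summable_norm_neg_mul_pow x hq)

lemma qPochInf_self_eq_mul (hq : ‖q‖ < 1) :
    qPochInf q q = qPochInf q (q ^ 2) * qPochInf (q ^ 2) (q ^ 2) := by
  have hq2 : ‖q ^ 2‖ < 1 := (norm_pow q 2).trans_lt (pow_lt_one₀ (norm_nonneg q) hq two_ne_zero)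
  have heven : Tendsto (fun n ↦ qPoch q q (2 * n)) atTop (𝓝 (qPochInf q q)) :=
    (tendsto_qPoch q hq).comp (tendsto_id.const_mul_atTop' two_pos)
  refine tendsto_nhds_unique heven ?_
  exact ((tendsto_qPoch q hq2).mul (tendsto_qPoch (q ^ 2) hq2)).congr (qPoch_mul_qPoch_sq q)

lemma tendsto_invPoch (hq : ‖q‖ < 1) : Tendsto (invPoch q) atTop (𝓝 (qPochInf q q)⁻¹) :=
  (tendsto_qPoch q hq).inv₀ (qPochInf_ne_zero hq hq)

lemma exists_norm_le_of_tendsto {E : Type*} [SeminormedAddCommGroup E] {u : ℕ → E} {l : E}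
    (hu : Tendsto u atTop (𝓝 l)) : ∃ C, ∀ n, ‖u n‖ ≤ C := by
  obtain ⟨C, hC⟩ := (Metric.isBounded_range_of_tendsto u hu).exists_norm_le
  exact ⟨C, fun n ↦ hC _ ⟨n, rfl⟩⟩

lemma tendsto_sum_antidiagonal_mul {R : Type*} [NormedRing R] [CompleteSpace R] {a : ℕ → R}
    {c : ℕ → ℕ → R} {l : R} {C : ℝ} (ha : Summable fun r ↦ ‖a r‖) (hC : ∀ r m, ‖c r m‖ ≤ C)
    (hc : ∀ r, Tendsto (c r) atTop (𝓝 l)) :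
    Tendsto (fun n ↦ ∑ p ∈ antidiagonal n, a p.1 * c p.1 p.2) atTop (𝓝 ((∑' r, a r) * l)) := by
  let f (n r : ℕ) : R := if r ≤ n then a r * c r (n - r) else 0
  have hsum (n : ℕ) : ∑ p ∈ antidiagonal n, a p.1 * c p.1 p.2 = ∑' r, f n r := by
    rw [Nat.sum_antidiagonal_eq_sum_range_succ_mk,
      tsum_eq_sum (s := range (n + 1)) fun r hr ↦ if_neg (by rw [mem_range] at hr; omega)]
    exact sum_congr rfl fun r hr ↦ (if_pos (Nat.lt_succ_iff.1 (mem_range.1 hr))).symm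
  simp only [hsum]
  rw [← ha.of_norm.tsum_mul_right l]
  refine tendsto_tsum_of_dominated_convergence (ha.mul_right C) (fun r ↦ ?_)
    (Eventually.of_forall fun n r ↦ ?_)
  · refine (((hc r).comp (tendsto_sub_atTop_nat r)).const_mul (a r)).congr' ?_
    filter_upwards [eventually_ge_atTop r] with n hn using (if_pos hn).symm
  · by_cases hr : r ≤ n
    · simpa only [f, if_pos hr] using norm_mul_le_of_le le_rfl (hC r (n - r))
    · simpa only [f, if_neg hr, norm_zero] using
        mul_nonneg (norm_nonneg (a r)) ((norm_nonneg _).trans (hC 0 0))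

theorem tendsto_baileyBeta (hq : ‖q‖ < 1) {α : ℕ → ℂ} (hα : Summable α) :
    Tendsto (baileyBeta q α) atTop
      (𝓝 ((∑' r, α r) * ((qPochInf q q)⁻¹ * (qPochInf q q)⁻¹))) := by
  obtain ⟨C, hC⟩ := exists_norm_le_of_tendsto (tendsto_invPoch hq)
  refine tendsto_sum_antidiagonal_mul (c := fun r m ↦ invPoch q m * invPoch q (m + 2 * r))
    (C := C * C) hα.norm (fun r m ↦ ?_) fun r ↦ ?_
  · exact norm_mul_le_of_le (hC _) (hC _)
  · exact (tendsto_invPoch hq).mul ((tendsto_invPoch hq).comp (tendsto_add_atTop_nat (2 * r)))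

lemma norm_pow_sq_le (hq : ‖q‖ < 1) (n : ℕ) : ‖q ^ n ^ 2‖ ≤ ‖q‖ ^ n := by
  rw [norm_pow]
  exact pow_le_pow_of_le_one (norm_nonneg q) hq.le (Nat.le_self_pow two_ne_zero n)

lemma summable_pow_sq_mul (hq : ‖q‖ < 1) {a : ℕ → ℂ} {C : ℝ} (ha : ∀ n, ‖a n‖ ≤ C) :
    Summable fun n ↦ q ^ n ^ 2 * a n :=
  .of_norm_bounded ((summable_geometric_of_lt_one (norm_nonneg q) hq).mul_right C) fun n ↦
    norm_mul_le_of_le (norm_pow_sq_le hq n) (ha n)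

theorem tsum_pow_sq_mul_baileyBeta (hq : ‖q‖ < 1) {α : ℕ → ℂ} (hα : Summable α) :
    ∑' r, q ^ r ^ 2 * baileyBeta q α r = (∑' r, q ^ r ^ 2 * α r) / qPochInf q q := by
  obtain ⟨A, hA⟩ := exists_norm_le_of_tendsto hα.tendsto_atTop_zero
  obtain ⟨B, hB⟩ := exists_norm_le_of_tendsto (tendsto_baileyBeta hq hα)
  obtain ⟨C, hC⟩ := exists_norm_le_of_tendsto (tendsto_invPoch hq)
  have hchain : Tendsto (baileyBeta q fun r ↦ q ^ r ^ 2 * α r) atTop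
      (𝓝 ((∑' r, q ^ r ^ 2 * baileyBeta q α r) * (qPochInf q q)⁻¹)) := by
    refine (tendsto_sum_antidiagonal_mul (summable_pow_sq_mul hq hB).norm (fun _ ↦ hC)
      fun _ ↦ tendsto_invPoch hq).congr fun n ↦ ?_
    exact bailey_lemma (not_isOfFinOrder_of_norm_lt_one hq) α n
  have hlimit := tendsto_nhds_unique hchain (tendsto_baileyBeta hq (summable_pow_sq_mul hq hA))
  rw [← mul_assoc] at hlimit
  exact mul_right_cancel₀ (inv_ne_zero (qPochInf_ne_zero hq hq)) hlimit

theorem tsum_pow_sq_mul_thetaCoeff (hq : ‖q‖ < 1) :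
    ∑' n, q ^ n ^ 2 * thetaCoeff n =
      qPochInf (q ^ 2) (q ^ 2) * qPochInf q (q ^ 2) * qPochInf q (q ^ 2) := by
  have hq2 : ‖q ^ 2‖ < 1 := (norm_pow q 2).trans_lt (pow_lt_one₀ (norm_nonneg q) hq two_ne_zero)
  have hne := qPochInf_ne_zero hq hq
  have hne2 := qPochInf_ne_zero hq2 hq2
  have hlimit : (∑' n, q ^ n ^ 2 * thetaCoeff n) * ((qPochInf q q)⁻¹ * (qPochInf q q)⁻¹) =
      (qPochInf (q ^ 2) (q ^ 2))⁻¹ := by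
    refine tendsto_nhds_unique
      (tendsto_baileyBeta hq (summable_pow_sq_mul hq norm_thetaCoeff_le)) ?_
    exact ((tendsto_qPoch (q ^ 2) hq2).inv₀ hne2).congr fun n ↦
      (baileyBeta_theta (not_isOfFinOrder_of_norm_lt_one hq) n).symm
  calc
    _ = qPochInf q q * qPochInf q q / qPochInf (q ^ 2) (q ^ 2) := by
        field_simp at hlimit ⊢
        exact hlimit
    _ = _ := by
        rw [qPochInf_self_eq_mul hq]
        field_simp

end Limits

section Partitions

variable {q : ℂ} {k : ℕ}

/-- A partition with at most one part is its largest part. -/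
def partOneEquiv : PartK 1 ≃ ℕ where
  toFun l := l.1 0
  invFun n := ⟨Pi.single 0 n, antitone_nat_of_succ_le fun i ↦ by simp,
    fun i hi ↦ by simp [Nat.one_le_iff_ne_zero.1 hi]⟩
  left_inv l := by
    refine Subtype.ext (funext fun i ↦ ?_)
    rcases i with _ | i
    · simp
    · simp [l.2.2 (i + 1) (by omega)]
  right_inv n := by simp

/-- The partition with at most `k + 2` parts obtained from one with at most `k + 1` parts by
appending a smallest part. -/
def PartK.snoc (m : Σ l : PartK (k + 1), Fin (l.1 k + 1)) : PartK (k + 2) :=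
  ⟨Function.update m.1.1 (k + 1) m.2,
    antitone_nat_of_succ_le fun i ↦ by
      have hlast := m.2.is_le
      have hanti := m.1.2.1 i.le_succ
      grind [Function.update_apply],
    fun i hi ↦ by rw [Function.update_of_ne (by omega), m.1.2.2 i (by omega)]⟩

lemma PartK.snoc_apply_last (m : Σ l : PartK (k + 1), Fin (l.1 k + 1)) :
    (snoc m).1 (k + 1) = m.2 :=
  Function.update_self ..

lemma PartK.snoc_apply_of_le (m : Σ l : PartK (k + 1), Fin (l.1 k + 1)) {i : ℕ} (hi : i ≤ k) :
    (snoc m).1 i = m.1.1 i :=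
  Function.update_of_ne (by omega) ..

lemma PartK.snoc_bijective : Function.Bijective (snoc (k := k)) := by
  constructor
  · rintro ⟨l, r⟩ ⟨m, s⟩ h
    obtain rfl : l = m := by
      refine Subtype.ext (funext fun i ↦ ?_)
      rcases le_or_gt i k with hi | hi
      · simpa only [snoc_apply_of_le _ hi] using congrArg (·.1 i) h
      · rw [l.2.2 i hi, m.2.2 i hi]
    have hlast := congrArg (·.1 (k + 1)) h
    simp only [snoc_apply_last] at hlast
    rw [Fin.ext hlast]
  · intro l
    refine ⟨⟨⟨Function.update l.1 (k + 1) 0, ?_, fun i hi ↦ ?_⟩, ⟨l.1 (k + 1), ?_⟩⟩, ?_⟩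
    · refine antitone_nat_of_succ_le fun i ↦ ?_
      have hanti := l.2.1 i.le_succ
      grind [Function.update_apply]
    · rcases eq_or_ne i (k + 1) with rfl | hne
      · exact Function.update_self ..
      · rw [Function.update_of_ne hne, l.2.2 i (by omega)]
    · change l.1 (k + 1) < Function.update l.1 (k + 1) 0 k + 1
      rw [Function.update_of_ne (by omega)]
      exact Nat.lt_succ_of_le (l.2.1 k.le_succ)
    · exact Subtype.ext (by simp [snoc])

/-- Appending a smallest part, as a bijection. -/
noncomputable def partSnocEquiv (k : ℕ) : (Σ l : PartK (k + 1), Fin (l.1 k + 1)) ≃ PartK (k + 2) :=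
  .ofBijective PartK.snoc PartK.snoc_bijective

lemma sum_range_snoc {M : Type*} [AddCommMonoid M] (m : Σ l : PartK (k + 1), Fin (l.1 k + 1))
    (f : ℕ → M) :
    ∑ i ∈ range (k + 2), f ((partSnocEquiv k m).1 i) =
      ∑ i ∈ range (k + 1), f (m.1.1 i) + f m.2 := by
  rw [sum_range_succ, partSnocEquiv, Equiv.ofBijective_apply, PartK.snoc_apply_last]
  congr 1
  exact sum_congr rfl fun i hi ↦ by
    rw [PartK.snoc_apply_of_le _ (Nat.lt_succ_iff.1 (mem_range.1 hi))]

lemma summable_pow_wtK {r : ℝ} (hr0 : 0 ≤ r) (hr1 : r < 1) (k : ℕ) :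
    Summable fun l : PartK (k + 1) ↦ r ^ wtK (k + 1) l := by
  have hgeom := summable_geometric_of_lt_one hr0 hr1
  induction k with
  | zero =>
    exact (partOneEquiv.summable_iff.2 hgeom).congr fun l ↦
      congrArg (r ^ ·) (sum_range_one l.1).symm
  | succ k ih =>
    have hprod := ih.mul_of_nonneg hgeom (fun _ ↦ pow_nonneg hr0 _) fun _ ↦ pow_nonneg hr0 _
    have hinj : Function.Injective
        fun m : Σ l : PartK (k + 1), Fin (l.1 k + 1) ↦ (m.1, (m.2 : ℕ)) := by
      rintro ⟨l, s⟩ ⟨m, t⟩ h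
      simp only [Prod.mk.injEq] at h
      obtain ⟨rfl, hst⟩ := h
      rw [Fin.ext hst]
    refine (partSnocEquiv k).summable_iff.1 ((hprod.comp_injective hinj).congr fun m ↦ ?_)
    have hwt : wtK (k + 2) (partSnocEquiv k m) = wtK (k + 1) m.1 + m.2 := sum_range_snoc m id
    simp only [Function.comp_apply, hwt, pow_add]

/-- The summand `q^{λ_1² + ⋯ + λ_{k+1}²} β(λ_{k+1}) / ∏_{i ≤ k} (q;q)_{λ_i - λ_{i+1}}` of the
multisum produced by iterating Bailey's lemma. -/
noncomputable def chainSummand (q : ℂ) (β : ℕ → ℂ) (k : ℕ) (l : PartK (k + 1)) : ℂ :=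
  q ^ n2K (k + 1) l * β (l.1 k) * ∏ i ∈ range k, invPoch q (l.1 i - l.1 (i + 1))

lemma chainSummand_snoc (q : ℂ) (β : ℕ → ℂ) (m : Σ l : PartK (k + 1), Fin (l.1 k + 1)) :
    chainSummand q β (k + 1) (partSnocEquiv k m) =
      q ^ n2K (k + 1) m.1 * (∏ i ∈ range k, invPoch q (m.1.1 i - m.1.1 (i + 1))) *
        (q ^ (m.2 : ℕ) ^ 2 * β m.2 * invPoch q (m.1.1 k - m.2)) := by
  have hn2 : n2K (k + 2) (partSnocEquiv k m) = n2K (k + 1) m.1 + (m.2 : ℕ) ^ 2 :=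
    sum_range_snoc m (· ^ 2)
  have hprod : ∏ i ∈ range k, invPoch q ((PartK.snoc m).1 i - (PartK.snoc m).1 (i + 1)) =
      ∏ i ∈ range k, invPoch q (m.1.1 i - m.1.1 (i + 1)) :=
    prod_congr rfl fun i hi ↦ by
      have := mem_range.1 hi
      rw [PartK.snoc_apply_of_le _ (by omega), PartK.snoc_apply_of_le _ (by omega)]
  rw [chainSummand, hn2, prod_range_succ, partSnocEquiv, Equiv.ofBijective_apply, hprod,
    PartK.snoc_apply_last, PartK.snoc_apply_of_le _ le_rfl, pow_add]
  ring

lemma summable_chainSummand (hq : ‖q‖ < 1) {β : ℕ → ℂ} {B : ℝ} (hβ : ∀ n, ‖β n‖ ≤ B) (k : ℕ) :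
    Summable (chainSummand q β k) := by
  obtain ⟨C, hC⟩ := exists_norm_le_of_tendsto (tendsto_invPoch hq)
  refine .of_norm_bounded (((summable_pow_wtK (norm_nonneg q) hq k).mul_right B).mul_right
    (C ^ k)) fun l ↦ norm_mul_le_of_le (norm_mul_le_of_le ?_ (hβ _)) ?_
  · rw [norm_pow]
    exact pow_le_pow_of_le_one (norm_nonneg q) hq.le
      (sum_le_sum fun i _ ↦ Nat.le_self_pow two_ne_zero (l.1 i))
  · rw [norm_prod]
    exact (prod_le_prod (fun _ _ ↦ norm_nonneg _) fun _ _ ↦ hC _).trans (by simp)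

lemma tsum_chainSummand_succ (hq : ‖q‖ < 1) {α : ℕ → ℂ} (hα : Summable α) (k : ℕ) :
    ∑' l, chainSummand q (baileyBeta q α) (k + 1) l =
      ∑' l, chainSummand q (baileyBeta q fun r ↦ q ^ r ^ 2 * α r) k l := by
  obtain ⟨B, hB⟩ := exists_norm_le_of_tendsto (tendsto_baileyBeta hq hα)
  have hsummable := (partSnocEquiv k).summable_iff.2 (summable_chainSummand hq hB (k + 1))
  refine (partSnocEquiv k).tsum_eq _ |>.symm.trans <| hsummable.tsum_sigma.trans <|
    tsum_congr fun l ↦ ?_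
  simp only [Function.comp_apply, chainSummand_snoc]
  rw [tsum_fintype, ← mul_sum, Fin.sum_univ_eq_sum_range
      (fun r ↦ q ^ r ^ 2 * baileyBeta q α r * invPoch q (l.1 k - r)),
    ← Nat.sum_antidiagonal_eq_sum_range_succ fun r m ↦ q ^ r ^ 2 * baileyBeta q α r * invPoch q m,
    bailey_lemma (not_isOfFinOrder_of_norm_lt_one hq), chainSummand]
  ring

theorem tsum_chainSummand (hq : ‖q‖ < 1) {α : ℕ → ℂ} (hα : Summable α) (k : ℕ) :
    ∑' l, chainSummand q (baileyBeta q α) k l =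
      (∑' r, (q ^ (k + 1)) ^ r ^ 2 * α r) / qPochInf q q := by
  induction k generalizing α with
  | zero =>
    rw [← partOneEquiv.symm.tsum_eq, zero_add, pow_one, ← tsum_pow_sq_mul_baileyBeta hq hα]
    refine tsum_congr fun r ↦ ?_
    have hr : (partOneEquiv.symm r).1 0 = r := partOneEquiv.apply_symm_apply r
    simp only [chainSummand, n2K, zero_add, sum_range_one, prod_range_zero, mul_one, hr]
  | succ k ih =>
    obtain ⟨A, hA⟩ := exists_norm_le_of_tendsto hα.tendsto_atTop_zero
    rw [tsum_chainSummand_succ hq hα, ih (summable_pow_sq_mul hq hA)]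
    congr 1
    exact tsum_congr fun r ↦ by ring

lemma chainSummand_theta (hq : ¬IsOfFinOrder q) (l : PartK (k + 1)) :
    chainSummand q (baileyBeta q fun r ↦ q ^ r ^ 2 * thetaCoeff r) k l =
      q ^ n2K (k + 1) l / (qPoch (-q) q (l.1 k) * pochK q q (k + 1) l) := by
  simp only [chainSummand, baileyBeta_theta hq, ← qPoch_mul_qPoch_neg, invPoch, prod_inv_distrib]
  rw [pochK, prod_range_succ, l.2.2 (k + 1) le_rfl, Nat.sub_zero, div_eq_mul_inv]
  simp only [mul_inv]
  ring

end Partitions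

/-- Identity (19): for `k ≥ 1`, `|q| < 1`,
`Σ_{l(λ)≤k} q^{n_2(λ)} / ((-q;q)_{λ_k} (q;q)_λ)
  = (q^{2k+2},q^{k+1},q^{k+1};q^{2k+2})_∞ / (q;q)_∞`. -/
theorem rr_type_19 (k : ℕ) (hk : 1 ≤ k) (q : ℂ) (hq : ‖q‖ < 1) :
    ∑' lam : PartK k,
        q ^ n2K k lam / (qPoch (-q) q (lam.1 (k - 1)) * pochK q q k lam)
      = qPochInf (q ^ (2 * k + 2)) (q ^ (2 * k + 2)) *
          qPochInf (q ^ (k + 1)) (q ^ (2 * k + 2)) *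
          qPochInf (q ^ (k + 1)) (q ^ (2 * k + 2)) / qPochInf q q := by
  obtain ⟨k, rfl⟩ := Nat.exists_eq_add_of_le' hk
  have hq' : ‖q ^ (k + 2)‖ < 1 :=
    (norm_pow q _).trans_lt (pow_lt_one₀ (norm_nonneg q) hq (by omega))
  calc
    _ = ∑' l, chainSummand q (baileyBeta q fun r ↦ q ^ r ^ 2 * thetaCoeff r) k l :=
        tsum_congr fun l ↦ (chainSummand_theta (not_isOfFinOrder_of_norm_lt_one hq) l).symm
    _ = (∑' r, (q ^ (k + 2)) ^ r ^ 2 * thetaCoeff r) / qPochInf q q := by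
        rw [tsum_chainSummand hq (summable_pow_sq_mul hq norm_thetaCoeff_le)]
        congr 1
        exact tsum_congr fun r ↦ by ring
    _ = _ := by
        rw [tsum_pow_sq_mul_thetaCoeff hq', ← pow_mul]
        ring_nf
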